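/- Let f : ℝ^d → ℝ^m, x̄ ∈ ℝ^d, and A = Df(x̄) its Jacobian matrix, and suppose there exist C > 0 and ε > 0 such that ‖f(x̄ + z) − f(x̄ − z) − 2·A·z‖ ≤ C·‖z‖³ for all ‖z‖ ≤ ε. Let z¹, …, z^{n_s} ∈ ℝ^d satisfy ‖zⁱ‖ ≤ δ for some δ ≤ ε, let Z ∈ ℝ^{d×n_s} have columns zⁱ, let Y ∈ ℝ^{m×n_s} have columns f(x̄ + zⁱ) − f(x̄ − zⁱ), and suppose the smallest eigenvalue of the Gram matrix G = Z·Zᵀ = Σᵢ zⁱ(zⁱ)ᵀ is at least λ > 0. Then the LLS-CD estimate Â = (1/2)·Y·Zᵀ·G⁻¹ satisfies ‖Â − A‖ ≤ (C·n_s·δ⁴)/(2λ) in operator norm. (This makes precise the error term of order ‖δx‖² + ‖δu‖² in equation (3) of the paper, since λ is of order n_s·δ².) -/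

import Mathlib

open Matrix

/-- Quantitative error bound for the LLS-CD Jacobian estimator: if the central
differences of `f` about `xbar` match `2 A z` up to `C ‖z‖³` for `‖z‖ ≤ ε`, the
samples have norm at most `δ ≤ ε`, and the Gram matrix `G = Z Zᵀ` has smallest
eigenvalue at least `λ > 0`, then the estimate `Â = (1/2) Y Zᵀ G⁻¹` satisfies
`‖Â - A‖ ≤ C ns δ⁴ / (2 λ)` in the ℓ²→ℓ² operator norm. -/
theorem llscd_error_bound
    {d m ns : ℕ}
    (f : EuclideanSpace ℝ (Fin d) → EuclideanSpace ℝ (Fin m))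
    (xbar : EuclideanSpace ℝ (Fin d))
    (A : Matrix (Fin m) (Fin d) ℝ)
    (C ε : ℝ) (hC : 0 < C) (hε : 0 < ε)
    (hcd : ∀ z : EuclideanSpace ℝ (Fin d), ‖z‖ ≤ ε →
      ‖f (xbar + z) - f (xbar - z) - (2 : ℝ) • (Matrix.toEuclideanLin A) z‖ ≤ C * ‖z‖ ^ 3)
    (z : Fin ns → EuclideanSpace ℝ (Fin d))
    (δ : ℝ) (hδ : δ ≤ ε) (hz : ∀ i, ‖z i‖ ≤ δ)
    (Z : Matrix (Fin d) (Fin ns) ℝ) (hZ : ∀ j i, Z j i = z i j)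
    (Y : Matrix (Fin m) (Fin ns) ℝ)
    (hY : ∀ j i, Y j i = (f (xbar + z i) - f (xbar - z i)) j)
    (lam : ℝ) (hlam : 0 < lam)
    (hG : (Z * Zᵀ - lam • (1 : Matrix (Fin d) (Fin d) ℝ)).PosSemidef) :
    ‖LinearMap.toContinuousLinearMap
        (Matrix.toEuclideanLin ((1 / 2 : ℝ) • (Y * Zᵀ * (Z * Zᵀ)⁻¹) - A))‖ ≤
      C * ns * δ ^ 4 / (2 * lam) := by
  have hGd : (Z * Zᵀ).PosDef := by
    have h1 : (lam • (1 : Matrix (Fin d) (Fin d) ℝ)).PosDef := Matrix.PosDef.one.smul hlam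
    have h2 := h1.add_posSemidef hG
    simpa using h2
  have hdet : IsUnit (Z * Zᵀ).det := (Matrix.isUnit_iff_isUnit_det _).1 hGd.isUnit
  have hE : ∀ i, ‖f (xbar + z i) - f (xbar - z i) - (2 : ℝ) • (Matrix.toEuclideanLin A) (z i)‖
      ≤ C * δ ^ 3 := fun i =>
    (hcd (z i) ((hz i).trans hδ)).trans (by
      have := hz i
      gcongr)
  have hinv : (Z * Zᵀ) * (Z * Zᵀ)⁻¹ = 1 := Matrix.mul_nonsing_inv _ hdet
  have hB : (1 / 2 : ℝ) • (Y * Zᵀ * (Z * Zᵀ)⁻¹) - A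
      = (1 / 2 : ℝ) • ((Y - (2 : ℝ) • (A * Z)) * Zᵀ * (Z * Zᵀ)⁻¹) := by
    have : (A * Z) * Zᵀ * (Z * Zᵀ)⁻¹ = A := by
      rw [Matrix.mul_assoc A, Matrix.mul_assoc A, hinv, Matrix.mul_one]
    rw [Matrix.sub_mul, Matrix.sub_mul, Matrix.smul_mul, Matrix.smul_mul, this, smul_sub, smul_smul]
    norm_num
  refine ContinuousLinearMap.opNorm_le_bound _ (by positivity) fun w => ?_
  obtain ⟨v, hv⟩ : ∃ v : EuclideanSpace ℝ (Fin d), v = WithLp.toLp 2 ((Z * Zᵀ)⁻¹ *ᵥ w.ofLp) :=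
    ⟨_, rfl⟩
  have hvw : (Z * Zᵀ) *ᵥ v.ofLp = w.ofLp := by
    rw [hv]; simp only [Matrix.mulVec_mulVec, hinv, Matrix.one_mulVec]
  have hZv : ∀ i, (Zᵀ *ᵥ v.ofLp) i = inner ℝ (z i) v := by
    intro i
    simp [Matrix.mulVec, dotProduct, PiLp.inner_apply, hZ, mul_comm]
  have hvn : lam * ‖v‖ ≤ ‖w‖ := by
    have h1 := hG.dotProduct_mulVec_nonneg v.ofLp
    rw [Matrix.sub_mulVec, hvw, Matrix.smul_mulVec, Matrix.one_mulVec] at h1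
    have h2 : inner ℝ v w - lam * ‖v‖ ^ 2 = star v.ofLp ⬝ᵥ (w.ofLp - lam • v.ofLp) := by
      rw [← real_inner_self_eq_norm_sq]
      simp only [PiLp.inner_apply, dotProduct, Finset.mul_sum, ← Finset.sum_sub_distrib]
      refine Finset.sum_congr rfl fun i _ => ?_
      simp
      ring
    have h3 := real_inner_le_norm v w
    rcases (norm_nonneg v).eq_or_lt with h0 | h0
    · rw [← h0]; simp
    · refine le_of_mul_le_mul_left ?_ h0
      nlinarith
  have hsum : Matrix.toEuclideanLin ((1 / 2 : ℝ) • (Y * Zᵀ * (Z * Zᵀ)⁻¹) - A) w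
      = (1 / 2 : ℝ) • ∑ i, (inner ℝ (z i) v : ℝ) •
        (f (xbar + z i) - f (xbar - z i) - (2 : ℝ) • (Matrix.toEuclideanLin A) (z i)) := by
    rw [hB]
    ext j
    have h1 : ((1 / 2 : ℝ) • ((Y - (2 : ℝ) • (A * Z)) * Zᵀ * (Z * Zᵀ)⁻¹)) *ᵥ w.ofLp
        = (1 / 2 : ℝ) • ((Y - (2 : ℝ) • (A * Z)) *ᵥ (Zᵀ *ᵥ v.ofLp)) := by
      rw [hv, Matrix.smul_mulVec]
      simp only [Matrix.mulVec_mulVec, Matrix.mul_assoc]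
    have h2 : ∀ i, (A * Z) j i = (Matrix.toEuclideanLin A (z i)) j := by
      intro i
      simp [Matrix.mul_apply, Matrix.toLpLin_apply, Matrix.mulVec, dotProduct, hZ]
    rw [Matrix.toLpLin_apply, h1]
    simp only [PiLp.smul_apply, Pi.smul_apply, WithLp.ofLp_sum, Finset.sum_apply]
    congr 1
    rw [Matrix.mulVec, dotProduct]
    refine Finset.sum_congr rfl fun i _ => ?_
    rw [hZv, Matrix.sub_apply, Matrix.smul_apply, h2, hY]
    simp [mul_comm]
  rw [LinearMap.coe_toContinuousLinearMap', hsum, norm_smul]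
  have hterm : ‖∑ i, (inner ℝ (z i) v : ℝ) •
        (f (xbar + z i) - f (xbar - z i) - (2 : ℝ) • (Matrix.toEuclideanLin A) (z i))‖
      ≤ ns * (C * δ ^ 4 * ‖v‖) := by
    refine (norm_sum_le _ _).trans ?_
    have : ∀ i ∈ (Finset.univ : Finset (Fin ns)), ‖(inner ℝ (z i) v : ℝ) •
        (f (xbar + z i) - f (xbar - z i) - (2 : ℝ) • (Matrix.toEuclideanLin A) (z i))‖
        ≤ C * δ ^ 4 * ‖v‖ := by
      intro i _
      have h0 : 0 ≤ δ := (norm_nonneg _).trans (hz i)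
      rw [norm_smul]
      calc _ ≤ (δ * ‖v‖) * (C * δ ^ 3) := by
            refine mul_le_mul ?_ (hE i) (norm_nonneg _) (by positivity)
            exact (norm_inner_le_norm _ _).trans (by gcongr; exact hz i)
        _ = _ := by ring
    refine (Finset.sum_le_sum this).trans ?_
    simp
  have hv' : ‖v‖ ≤ ‖w‖ / lam := by rw [le_div_iff₀ hlam]; linarith
  calc _ ≤ ‖(1 / 2 : ℝ)‖ * (ns * (C * δ ^ 4 * (‖w‖ / lam))) := by
        gcongr
        exact hterm.trans (by gcongr)
    _ = _ := by
        norm_num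
        field_simp
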